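/- arXiv:2303.02991 — 5 statements merged into one kernel-verified Lean document; each statement's English description precedes it below -/
import Mathlib

section
/- Let X_0 and X_1 be real Banach spaces and ι : X_1 → X_0 a compact bounded linear operator. Fix κ ∈ [0, 1/2), L > 0, and let N be a natural number such that the image under ι of the closed unit ball of X_1 can be covered by N balls of radius (1−2κ)/(4L) in X_0. Let 𝔹 ⊆ X_0 and let U : 𝔹 → X_0 be an admissible map, i.e. U = ι∘C + 𝓛 where C : 𝔹 → X_1 satisfies ‖C ξ_1 − C ξ_2‖_{X_1} ≤ L‖ξ_1 − ξ_2‖_{X_0} and 𝓛 : 𝔹 → X_0 satisfies ‖𝓛 ξ_1 − 𝓛 ξ_2‖_{X_0} ≤ κ‖ξ_1 − ξ_2‖_{X_0} for all ξ_1, ξ_2 ∈ 𝔹. Then for every subset S ⊆ 𝔹, every R' > 0, and every finite set V ⊆ 𝔹 such that every point of S lies within distance R' (in X_0) of V, there exists a finite set V' ⊆ U(S) with card V' ≤ N · card V such that every point of U(S) lies within distance (κ + 1/2)·R' (in X_0) of V'. -/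
/-- One covering step of the exponential attractor construction.
Given a compact operator `ι : X₁ → X₀`, constants `0 ≤ κ < 1/2`, `L > 0`, and `N` closed
balls of radius `(1 - 2κ)/(4L)` covering `ι`(unit ball of `X₁`), and an admissible map
`U = ι ∘ C + 𝓛` on `𝔹 ⊆ X₀`, then any `R'`-net `V ⊆ 𝔹` of a set `S ⊆ 𝔹` can be refined to
a `(κ + 1/2)·R'`-net `V' ⊆ U(S)` of `U(S)` with `card V' ≤ N · card V`. -/
theorem net_refinement_of_admissible_map
    (X₀ X₁ : Type*) [NormedAddCommGroup X₀] [NormedSpace ℝ X₀] [CompleteSpace X₀]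
    [NormedAddCommGroup X₁] [NormedSpace ℝ X₁] [CompleteSpace X₁]
    (ι : X₁ →L[ℝ] X₀) (hι : IsCompactOperator ι)
    (κ L : ℝ) (hκ0 : 0 ≤ κ) (hκ : κ < 1/2) (hL : 0 < L)
    (N : ℕ) (y : Fin N → X₀)
    (hN : ι '' Metric.closedBall 0 1 ⊆ ⋃ i, Metric.closedBall (y i) ((1 - 2*κ)/(4*L)))
    (𝔹 : Set X₀) (U : X₀ → X₀) (C : X₀ → X₁) (𝓛 : X₀ → X₀)
    (hU : ∀ x ∈ 𝔹, U x = ι (C x) + 𝓛 x)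
    (hC : ∀ ξ₁ ∈ 𝔹, ∀ ξ₂ ∈ 𝔹, ‖C ξ₁ - C ξ₂‖ ≤ L * ‖ξ₁ - ξ₂‖)
    (h𝓛 : ∀ ξ₁ ∈ 𝔹, ∀ ξ₂ ∈ 𝔹, ‖𝓛 ξ₁ - 𝓛 ξ₂‖ ≤ κ * ‖ξ₁ - ξ₂‖)
    (S : Set X₀) (hS : S ⊆ 𝔹) (R' : ℝ) (hR' : 0 < R')
    (V : Set X₀) (hVfin : V.Finite) (hV𝔹 : V ⊆ 𝔹)
    (hVnet : ∀ x ∈ S, ∃ v ∈ V, ‖x - v‖ ≤ R') :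
    ∃ V' : Set X₀, V' ⊆ U '' S ∧ V'.Finite ∧ V'.ncard ≤ N * V.ncard ∧
      ∀ z ∈ U '' S, ∃ v ∈ V', ‖z - v‖ ≤ (κ + 1/2) * R' := by
  classical
  let Q : X₀ × Fin N → X₀ → Prop := fun p x =>
    x ∈ S ∧ ‖x - p.1‖ ≤ R' ∧ ‖ι (C x - C p.1) - (L * R') • y p.2‖ ≤ R' * (1 - 2*κ) / 4
  let P : Set (X₀ × Fin N) := {p | p ∈ V ×ˢ (Set.univ : Set (Fin N)) ∧ ∃ x, Q p x}
  let f : X₀ × Fin N → X₀ := fun p => if h : ∃ x, Q p x then h.choose else 0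
  have hf : ∀ p, (∃ x, Q p x) → Q p (f p) := by
    intro p h
    simp only [f, dif_pos h]
    exact h.choose_spec
  have hprod : (V ×ˢ (Set.univ : Set (Fin N))).Finite := hVfin.prod Set.finite_univ
  have hPsub : P ⊆ V ×ˢ (Set.univ : Set (Fin N)) := fun p hp => hp.1
  have hPfin : P.Finite := hprod.subset hPsub
  have hLR : 0 < L * R' := mul_pos hL hR'
  refine ⟨(fun p => U (f p)) '' P, ?_, hPfin.image _, ?_, ?_⟩
  · rintro _ ⟨p, hp, rfl⟩
    exact ⟨f p, (hf p hp.2).1, rfl⟩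
  · calc ((fun p => U (f p)) '' P).ncard ≤ P.ncard := Set.ncard_image_le hPfin
      _ ≤ (V ×ˢ (Set.univ : Set (Fin N))).ncard := Set.ncard_le_ncard hPsub hprod
      _ = N * V.ncard := by
        rw [Set.ncard_prod, Set.ncard_univ, Nat.card_eq_fintype_card, Fintype.card_fin, mul_comm]
  · rintro _ ⟨x, hx, rfl⟩
    obtain ⟨v, hv, hxv⟩ := hVnet x hx
    have hb : ι ((L * R')⁻¹ • (C x - C v)) ∈ ι '' Metric.closedBall 0 1 := by
      refine ⟨_, ?_, rfl⟩
      rw [mem_closedBall_zero_iff, norm_smul, Real.norm_of_nonneg (inv_nonneg.2 hLR.le),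
        inv_mul_le_iff₀ hLR, mul_one]
      exact (hC x (hS hx) v (hV𝔹 hv)).trans (mul_le_mul_of_nonneg_left hxv hL.le)
    obtain ⟨i, hi⟩ := Set.mem_iUnion.1 (hN hb)
    rw [mem_closedBall_iff_norm] at hi
    have hQ : Q (v, i) x := by
      refine ⟨hx, hxv, ?_⟩
      have e : ι (C x - C v) - (L * R') • y i
          = (L * R') • (ι ((L * R')⁻¹ • (C x - C v)) - y i) := by
        rw [smul_sub, map_smul, smul_inv_smul₀ hLR.ne']
      change ‖ι (C x - C v) - (L * R') • y i‖ ≤ _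
      rw [e, norm_smul, Real.norm_of_nonneg hLR.le]
      refine (mul_le_mul_of_nonneg_left hi hLR.le).trans (le_of_eq ?_)
      field_simp
    refine ⟨U (f (v, i)), ⟨(v, i), ⟨⟨hv, Set.mem_univ _⟩, x, hQ⟩, rfl⟩, ?_⟩
    obtain ⟨hw, hwv, hwi⟩ := hf (v, i) ⟨x, hQ⟩
    obtain ⟨-, -, hxi⟩ := hQ
    generalize f (v, i) = w at *
    dsimp only at hwv hwi hxi
    have h1 : ‖ι (C x) - ι (C w)‖ ≤ R' * (1 - 2*κ) / 4 + R' * (1 - 2*κ) / 4 := by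
      have e : ι (C x) - ι (C w) = (ι (C x - C v) - (L * R') • y i)
          - (ι (C w - C v) - (L * R') • y i) := by
        simp only [map_sub]; abel
      rw [e]
      exact (norm_sub_le _ _).trans (add_le_add hxi hwi)
    have h2 : ‖x - w‖ ≤ R' + R' := by
      have e : x - w = (x - v) - (w - v) := by abel
      rw [e]
      exact (norm_sub_le _ _).trans (add_le_add hxv hwv)
    have h3 := (h𝓛 x (hS hx) w (hS hw)).trans (mul_le_mul_of_nonneg_left h2 hκ0)
    have e : U x - U w = (ι (C x) - ι (C w)) + (𝓛 x - 𝓛 w) := by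
      rw [hU x (hS hx), hU w (hS hw)]; abel
    rw [e]
    refine (norm_add_le _ _).trans ?_
    linarith
end

section
/- Let X_0 and X_1 be real Banach spaces and ι : X_1 → X_0 a compact bounded linear operator. Fix κ ∈ [0, 1/2), L > 0, and let N be a natural number such that the image under ι of the closed unit ball of X_1 can be covered by N balls of radius (1−2κ)/(4L) in X_0. Let 𝔹 ⊆ X_0 be contained in the closed ball of radius R > 0 centered at a point x_0 ∈ 𝔹. For each n ∈ ℤ let U(n) : 𝔹 → 𝔹 be an admissible map, i.e. U(n) = ι∘C(n) + 𝓛(n) where C(n) : 𝔹 → X_1 is L-Lipschitz from the X_0-norm to the X_1-norm on 𝔹 and 𝓛(n) : 𝔹 → X_0 is κ-Lipschitz in the X_0-norm on 𝔹; for m ≥ n set U(m, n) := U(m−1)∘⋯∘U(n) (with U(n, n) = id). Then for every n ∈ ℤ and every integer k ≥ 1 there exists a finite set V_k(n) ⊆ U(n, n−k)(𝔹) with card V_k(n) ≤ N^k such that every point of U(n, n−k)(𝔹) lies within distance R·(κ + 1/2)^k (in X_0) of V_k(n). -/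
/-- Existence of the nets `V_k(n)`.  Under the admissible-decomposition
assumptions on the discrete processes `U(n) : 𝔹 → 𝔹`, for every `n ∈ ℤ` and `k ≥ 1` the set
`U(n, n-k)(𝔹)` (i.e. `Ucomp n k '' 𝔹`, where `Ucomp n k = U(n-1) ∘ ⋯ ∘ U(n-k)`) admits an
`R·(κ + 1/2)^k`-net `V_k(n)` of cardinality at most `N^k` consisting of points of
`U(n, n-k)(𝔹)`. -/
theorem exists_nets_of_discrete_process
    (X₀ X₁ : Type*) [NormedAddCommGroup X₀] [NormedSpace ℝ X₀] [CompleteSpace X₀]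
    [NormedAddCommGroup X₁] [NormedSpace ℝ X₁] [CompleteSpace X₁]
    (ι : X₁ →L[ℝ] X₀) (hι : IsCompactOperator ι)
    (κ L : ℝ) (hκ0 : 0 ≤ κ) (hκ : κ < 1/2) (hL : 0 < L)
    (N : ℕ) (y : Fin N → X₀)
    (hN : ι '' Metric.closedBall 0 1 ⊆ ⋃ i, Metric.closedBall (y i) ((1 - 2*κ)/(4*L)))
    (R : ℝ) (hR : 0 < R) (x₀ : X₀) (𝔹 : Set X₀) (hx₀ : x₀ ∈ 𝔹)
    (h𝔹 : 𝔹 ⊆ Metric.closedBall x₀ R)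
    (U : ℤ → X₀ → X₀) (hU𝔹 : ∀ n, ∀ x ∈ 𝔹, U n x ∈ 𝔹)
    (C : ℤ → X₀ → X₁) (𝓛 : ℤ → X₀ → X₀)
    (hU : ∀ n, ∀ x ∈ 𝔹, U n x = ι (C n x) + 𝓛 n x)
    (hC : ∀ n, ∀ ξ₁ ∈ 𝔹, ∀ ξ₂ ∈ 𝔹, ‖C n ξ₁ - C n ξ₂‖ ≤ L * ‖ξ₁ - ξ₂‖)
    (h𝓛 : ∀ n, ∀ ξ₁ ∈ 𝔹, ∀ ξ₂ ∈ 𝔹, ‖𝓛 n ξ₁ - 𝓛 n ξ₂‖ ≤ κ * ‖ξ₁ - ξ₂‖)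
    (Ucomp : ℤ → ℕ → X₀ → X₀)
    (hU0 : ∀ n, Ucomp n 0 = id)
    (hUsucc : ∀ n k, Ucomp n (k + 1) = U (n - 1) ∘ Ucomp (n - 1) k) :
    ∀ (n : ℤ) (k : ℕ), 1 ≤ k →
      ∃ V : Set X₀, V ⊆ Ucomp n k '' 𝔹 ∧ V.Finite ∧ V.ncard ≤ N ^ k ∧
        ∀ x ∈ Ucomp n k '' 𝔹, ∃ v ∈ V, ‖x - v‖ ≤ R * (κ + 1/2) ^ k := by
  intro n k _
  induction k generalizing n with
  | zero =>
    refine ⟨{x₀}, ?_, Set.finite_singleton _, by simp, ?_⟩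
    · simpa [hU0] using hx₀
    · intro x hx
      refine ⟨x₀, rfl, ?_⟩
      have hx' : x ∈ 𝔹 := by simpa [hU0] using hx
      have h := h𝔹 hx'
      rw [Metric.mem_closedBall, dist_eq_norm] at h
      simpa using h
  | succ k ih =>
    have ih' : ∃ V : Set X₀, V ⊆ Ucomp (n-1) k '' 𝔹 ∧ V.Finite ∧ V.ncard ≤ N ^ k ∧
        ∀ x ∈ Ucomp (n-1) k '' 𝔹, ∃ v ∈ V, ‖x - v‖ ≤ R * (κ + 1/2) ^ k := by
      rcases Nat.eq_zero_or_pos k with rfl | hk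
      · refine ⟨{x₀}, ?_, Set.finite_singleton _, by simp, ?_⟩
        · simpa [hU0] using hx₀
        · intro x hx
          refine ⟨x₀, rfl, ?_⟩
          have hx' : x ∈ 𝔹 := by simpa [hU0] using hx
          have h := h𝔹 hx'
          rw [Metric.mem_closedBall, dist_eq_norm] at h
          simpa using h
      · exact ih (n-1) hk
    obtain ⟨V, hVsub, hVfin, hVcard, hV⟩ := ih'
    have hmaps : ∀ (k : ℕ) (n : ℤ), ∀ x ∈ 𝔹, Ucomp n k x ∈ 𝔹 := by
      intro k
      induction k with
      | zero => intro n x hx; simpa [hU0] using hx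
      | succ k ihk =>
        intro n x hx
        rw [hUsucc]
        exact hU𝔹 _ _ (ihk _ _ hx)
    set S : Set X₀ := Ucomp (n-1) k '' 𝔹 with hS
    have hSB : S ⊆ 𝔹 := by
      rintro _ ⟨x, hx, rfl⟩
      exact hmaps _ _ _ hx
    have himg : Ucomp n (k+1) '' 𝔹 = U (n-1) '' S := by
      rw [hUsucc, Set.image_comp]
    rw [himg]
    set r : ℝ := R * (κ + 1/2) ^ k with hr
    have hrpos : 0 < r := by positivity
    have hLr : 0 < L * r := by positivity
    let m := n - 1
    let P : X₀ → Fin N → X₀ → Prop := fun v i w =>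
      w ∈ S ∧ ‖w - v‖ ≤ r ∧
        ‖ι (C (n-1) w) - ι (C (n-1) v) - (L * r) • y i‖ ≤ r * (1 - 2*κ) / 4
    classical
    let g : X₀ × Fin N → X₀ := fun p =>
      if h : ∃ w, P p.1 p.2 w then h.choose else p.1
    have hgS : ∀ p : X₀ × Fin N, p.1 ∈ S → g p ∈ S := by
      intro p hp
      by_cases h : ∃ w, P p.1 p.2 w
      · simp only [g, dif_pos h]
        exact h.choose_spec.1
      · simpa only [g, dif_neg h] using hp
    have hfin : (V ×ˢ (Set.univ : Set (Fin N))).Finite := hVfin.prod Set.finite_univ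
    refine ⟨(fun p => U (n-1) (g p)) '' (V ×ˢ (Set.univ : Set (Fin N))), ?_, hfin.image _, ?_, ?_⟩
    · rintro _ ⟨p, hp, rfl⟩
      exact ⟨g p, hgS p (hVsub hp.1), rfl⟩
    · refine (Set.ncard_image_le hfin).trans ?_
      rw [Set.ncard_prod, Set.ncard_univ, Nat.card_fin, pow_succ]
      exact Nat.mul_le_mul_right _ hVcard
    · rintro _ ⟨x, hx, rfl⟩
      obtain ⟨v, hv, hxv⟩ := hV x hx
      have hvS := hVsub hv
      have hb : (L * r)⁻¹ • (C (n-1) x - C (n-1) v) ∈ Metric.closedBall (0 : X₁) 1 := by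
        rw [mem_closedBall_zero_iff, norm_smul, norm_inv, Real.norm_of_nonneg hLr.le,
          inv_mul_le_iff₀ hLr, mul_one]
        exact (hC _ _ (hSB hx) _ (hSB hvS)).trans (by gcongr)
      have hc := hN (Set.mem_image_of_mem _ hb)
      obtain ⟨i, hi⟩ := Set.mem_iUnion.1 hc
      rw [Metric.mem_closedBall, dist_eq_norm] at hi
      have hP : P v i x := by
        refine ⟨hx, hxv, ?_⟩
        have e : ι (C (n-1) x) - ι (C (n-1) v) - (L * r) • y i
            = (L * r) • (ι ((L * r)⁻¹ • (C (n-1) x - C (n-1) v)) - y i) := by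
          rw [smul_sub, map_smul, smul_inv_smul₀ hLr.ne', map_sub]
        rw [e, norm_smul, Real.norm_of_nonneg hLr.le]
        calc L * r * _ ≤ L * r * ((1 - 2*κ)/(4*L)) := by gcongr
          _ = _ := by field_simp
      have hex : ∃ w, P v i w := ⟨x, hP⟩
      refine ⟨_, ⟨(v, i), ⟨hv, Set.mem_univ _⟩, rfl⟩, ?_⟩
      have hgP : P v i (g (v, i)) := by
        simp only [g, dif_pos hex]
        exact hex.choose_spec
      dsimp only
      generalize g (v, i) = w at hgP
      obtain ⟨hwS, hwv, hw⟩ := hgP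
      obtain ⟨_, _, hx3⟩ := hP
      rw [hU _ _ (hSB hx), hU _ _ (hSB hwS)]
      have h1 := h𝓛 (n-1) x (hSB hx) w (hSB hwS)
      have h2 : ‖x - w‖ ≤ 2 * r := by
        have := norm_sub_le (x - v) (w - v)
        rw [sub_sub_sub_cancel_right] at this
        linarith
      have h3 := mul_le_mul_of_nonneg_left h2 hκ0
      have h4 := norm_sub_le (ι (C (n-1) x) - ι (C (n-1) v) - (L * r) • y i)
        (ι (C (n-1) w) - ι (C (n-1) v) - (L * r) • y i)
      rw [sub_sub_sub_cancel_right, sub_sub_sub_cancel_right] at h4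
      have h5 := norm_add_le (ι (C (n-1) x) - ι (C (n-1) w)) (𝓛 (n-1) x - 𝓛 (n-1) w)
      rw [add_sub_add_comm, pow_succ, ← mul_assoc, ← hr]
      linarith
end

section
/- Let X_0 and X_1 be real Banach spaces and ι : X_1 → X_0 a compact bounded linear operator. Fix κ ∈ [0, 1/2), L > 0, and let N ≥ 2 be a natural number such that the image under ι of the closed unit ball of X_1 can be covered by N balls of radius (1−2κ)/(4L) in X_0. Let 𝔹 ⊆ X_0 be contained in the closed ball of radius R > 0 centered at a point x_0 ∈ 𝔹. For each n ∈ ℤ let U(n) : 𝔹 → 𝔹 be an admissible map, i.e. U(n) = ι∘C(n) + 𝓛(n) where C(n) : 𝔹 → X_1 is L-Lipschitz from the X_0-norm to the X_1-norm on 𝔹 and 𝓛(n) : 𝔹 → X_0 is κ-Lipschitz in the X_0-norm on 𝔹; for m ≥ n set U(m, n) := U(m−1)∘⋯∘U(n) (with U(n, n) = id). Then there exists a family of sets M(n) ⊆ 𝔹, n ∈ ℤ, such that dist_{X_0}(U(n, n−k)(𝔹), M(n)) ≤ R·(κ + 1/2)^k for all n ∈ ℤ and k ∈ ℕ, and such that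 for every ε ∈ (0, R], each M(n) can be covered by at most (k(ε)+1)² · N^{k(ε)+1} balls of radius ε in X_0, where k(ε) denotes the smallest positive integer k with R·(κ + 1/2)^k ≤ ε; in particular this covering bound is independent of n ∈ ℤ. -/
/-- Quantitative covering bound for the exponential attractor.
Under the admissible-decomposition assumptions on the processes `U(n) : 𝔹 → 𝔹`
(with `Ucomp n k = U(n-1) ∘ ⋯ ∘ U(n-k)`, so that `U(n, n-k)(𝔹) = Ucomp n k '' 𝔹`), there is
a family of sets `M(n) ⊆ 𝔹`, `n ∈ ℤ`, with
`dist_{X₀}(U(n, n-k)(𝔹), M(n)) ≤ R·(κ + 1/2)^k` for all `n ∈ ℤ`, `k ∈ ℕ`, and such that for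
every `ε ∈ (0, R]` each `M(n)` can be covered by at most `(k(ε)+1)² · N^(k(ε)+1)` closed
balls of radius `ε` in `X₀`, where `k(ε)` is the smallest positive integer `k` with
`R·(κ + 1/2)^k ≤ ε`; the bound is independent of `n`. -/
theorem exponential_attractor_covering_bound
    (X₀ X₁ : Type*) [NormedAddCommGroup X₀] [NormedSpace ℝ X₀] [CompleteSpace X₀]
    [NormedAddCommGroup X₁] [NormedSpace ℝ X₁] [CompleteSpace X₁]
    (ι : X₁ →L[ℝ] X₀) (hι : IsCompactOperator ι)
    (κ L : ℝ) (hκ0 : 0 ≤ κ) (hκ : κ < 1/2) (hL : 0 < L)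
    (N : ℕ) (hN2 : 2 ≤ N) (y : Fin N → X₀)
    (hN : ι '' Metric.closedBall 0 1 ⊆ ⋃ i, Metric.closedBall (y i) ((1 - 2*κ)/(4*L)))
    (R : ℝ) (hR : 0 < R) (x₀ : X₀) (𝔹 : Set X₀) (hx₀ : x₀ ∈ 𝔹)
    (h𝔹 : 𝔹 ⊆ Metric.closedBall x₀ R)
    (U : ℤ → X₀ → X₀) (hU𝔹 : ∀ n, ∀ x ∈ 𝔹, U n x ∈ 𝔹)
    (C : ℤ → X₀ → X₁) (𝓛 : ℤ → X₀ → X₀)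
    (hU : ∀ n, ∀ x ∈ 𝔹, U n x = ι (C n x) + 𝓛 n x)
    (hC : ∀ n, ∀ ξ₁ ∈ 𝔹, ∀ ξ₂ ∈ 𝔹, ‖C n ξ₁ - C n ξ₂‖ ≤ L * ‖ξ₁ - ξ₂‖)
    (h𝓛 : ∀ n, ∀ ξ₁ ∈ 𝔹, ∀ ξ₂ ∈ 𝔹, ‖𝓛 n ξ₁ - 𝓛 n ξ₂‖ ≤ κ * ‖ξ₁ - ξ₂‖)
    (Ucomp : ℤ → ℕ → X₀ → X₀)
    (hU0 : ∀ n, Ucomp n 0 = id)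
    (hUsucc : ∀ n k, Ucomp n (k + 1) = U (n - 1) ∘ Ucomp (n - 1) k) :
    ∃ M : ℤ → Set X₀,
      (∀ n, M n ⊆ 𝔹) ∧
      (∀ (n : ℤ) (k : ℕ), ∀ x ∈ Ucomp n k '' 𝔹,
        ∃ z ∈ M n, ‖x - z‖ ≤ R * (κ + 1/2) ^ k) ∧
      (∀ ε : ℝ, 0 < ε → ε ≤ R → ∀ n : ℤ,
        ∃ (m : ℕ) (c : Fin m → X₀),
          m ≤ (sInf {k : ℕ | 1 ≤ k ∧ R * (κ + 1/2) ^ k ≤ ε} + 1) ^ 2 *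
              N ^ (sInf {k : ℕ | 1 ≤ k ∧ R * (κ + 1/2) ^ k ≤ ε} + 1) ∧
          M n ⊆ ⋃ i, Metric.closedBall (c i) ε) := by
  classical
  have hr0 : ∀ k : ℕ, 0 < R * (κ + 1/2) ^ k := fun k => by positivity
  -- the ranges lie in 𝔹
  have hsub : ∀ (k : ℕ) (n : ℤ), Ucomp n k '' 𝔹 ⊆ 𝔹 := by
    intro k
    induction k with
    | zero => intro n; rw [hU0]; simp
    | succ k ih =>
      intro n
      rw [hUsucc, Set.image_comp]
      rintro _ ⟨x, hx, rfl⟩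
      exact hU𝔹 _ _ (ih _ hx)
  -- the ranges decrease
  have hdec : ∀ (k : ℕ) (n : ℤ), Ucomp n (k + 1) '' 𝔹 ⊆ Ucomp n k '' 𝔹 := by
    intro k
    induction k with
    | zero => intro n; rw [hU0 n, Set.image_id]; exact hsub _ _
    | succ k ih =>
      intro n
      rw [hUsucc n (k + 1), hUsucc n k, Set.image_comp, Set.image_comp]
      exact Set.image_mono (ih _)
  have hanti : ∀ n : ℤ, Antitone fun k : ℕ => Ucomp n k '' 𝔹 :=
    fun n => antitone_nat_of_succ_le fun k => hdec k n
  -- the finite nets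
  have key : ∀ (k : ℕ) (n : ℤ), ∃ V : Finset X₀, V.card ≤ N ^ k ∧
      (∀ v ∈ V, v ∈ Ucomp n k '' 𝔹) ∧
      ∀ x ∈ Ucomp n k '' 𝔹, ∃ v ∈ V, ‖x - v‖ ≤ R * (κ + 1/2) ^ k := by
    intro k
    induction k with
    | zero =>
      intro n
      refine ⟨{x₀}, by simp, ?_, ?_⟩
      · intro v hv
        rw [Finset.mem_singleton] at hv
        rw [hU0, Set.image_id, hv]; exact hx₀
      · intro x hx
        rw [hU0, Set.image_id] at hx
        refine ⟨x₀, by simp, ?_⟩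
        have := h𝔹 hx
        rw [mem_closedBall_iff_norm] at this
        simpa using this
    | succ k ih =>
      intro n
      obtain ⟨V, hcard, hVA, hV⟩ := ih (n - 1)
      set r := R * (κ + 1/2) ^ k with hr
      have hrpos : 0 < r := hr0 k
      set A := Ucomp (n - 1) k '' 𝔹 with hA
      have hA𝔹 : A ⊆ 𝔹 := hsub _ _
      obtain ⟨P, hP⟩ : ∃ P : X₀ × Fin N → X₀ → Prop, ∀ p x, P p x ↔ (x ∈ A ∧ ‖x - p.1‖ ≤ r ∧
        ‖ι (C (n - 1) x - C (n - 1) p.1) - (L * r) • y p.2‖ ≤ r * (1 - 2 * κ) / 4) :=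
        ⟨_, fun _ _ => Iff.rfl⟩
      have hrep : ∀ p : X₀ × Fin N, ∃ w : X₀, (p.1 ∈ V → w ∈ A) ∧ ∀ x, P p x → P p w := by
        intro p
        by_cases h : ∃ x, P p x
        · obtain ⟨w, hw⟩ := h
          exact ⟨w, fun _ => ((hP _ _).1 hw).1, fun _ _ => hw⟩
        · exact ⟨p.1, fun h => hVA _ h, fun x hx => (h ⟨x, hx⟩).elim⟩
      choose w hwA hwP using hrep
      have himg : Ucomp n (k + 1) '' 𝔹 = U (n - 1) '' A := by
        rw [hUsucc, Set.image_comp]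
      refine ⟨(V ×ˢ Finset.univ).image fun p => U (n - 1) (w p), ?_, ?_, ?_⟩
      · refine Finset.card_image_le.trans ?_
        rw [Finset.card_product, Finset.card_univ, Fintype.card_fin, pow_succ]
        exact Nat.mul_le_mul_right _ hcard
      · intro v hv
        obtain ⟨p, hp, rfl⟩ := Finset.mem_image.1 hv
        rw [himg]
        exact ⟨w p, hwA p (Finset.mem_product.1 hp).1, rfl⟩
      · intro z hz
        rw [himg] at hz
        obtain ⟨x, hx, rfl⟩ := hz
        obtain ⟨v, hv, hxv⟩ := hV x hx
        have hLr : 0 < L * r := mul_pos hL hrpos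
        have hmem : ι ((L * r)⁻¹ • (C (n - 1) x - C (n - 1) v)) ∈
            ι '' Metric.closedBall 0 1 := by
          refine ⟨_, ?_, rfl⟩
          rw [mem_closedBall_zero_iff, norm_smul, norm_inv, Real.norm_of_nonneg hLr.le,
            inv_mul_le_iff₀ hLr, mul_one]
          exact (hC _ _ (hA𝔹 hx) _ (hA𝔹 (hVA v hv))).trans
            (mul_le_mul_of_nonneg_left hxv hL.le)
        obtain ⟨i, hi⟩ := Set.mem_iUnion.1 (hN hmem)
        have hPx : P (v, i) x := by
          rw [hP]
          refine ⟨hx, hxv, ?_⟩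
          rw [mem_closedBall_iff_norm] at hi
          have e : ι (C (n - 1) x - C (n - 1) v) - (L * r) • y i =
              (L * r) • (ι ((L * r)⁻¹ • (C (n - 1) x - C (n - 1) v)) - y i) := by
            rw [smul_sub, map_smul, smul_inv_smul₀ hLr.ne']
          show ‖ι (C (n - 1) x - C (n - 1) v) - (L * r) • y i‖ ≤ _
          rw [e, norm_smul, Real.norm_of_nonneg hLr.le]
          calc L * r * _ ≤ L * r * ((1 - 2*κ)/(4*L)) := mul_le_mul_of_nonneg_left hi hLr.le
            _ = r * (1 - 2 * κ) / 4 := by field_simp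
        obtain ⟨hwA', hwv, hwι⟩ := (hP _ _).1 (hwP (v, i) x hPx)
        obtain ⟨-, -, hxι⟩ := (hP _ _).1 hPx
        refine ⟨U (n - 1) (w (v, i)), Finset.mem_image.2 ⟨(v, i), by simp [hv], rfl⟩, ?_⟩
        set w' := w (v, i)
        simp only at hwv hwι hxι
        have hxw : ‖x - w'‖ ≤ r + r := by
          have : x - w' = (x - v) - (w' - v) := by abel
          rw [this]
          exact (norm_sub_le _ _).trans (add_le_add hxv hwv)
        have hl := (h𝓛 (n - 1) _ (hA𝔹 hx) _ (hA𝔹 hwA')).trans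
          (mul_le_mul_of_nonneg_left hxw hκ0)
        have e : U (n - 1) x - U (n - 1) w' =
            ((ι (C (n - 1) x - C (n - 1) v) - (L * r) • y i) -
              (ι (C (n - 1) w' - C (n - 1) v) - (L * r) • y i)) +
            (𝓛 (n - 1) x - 𝓛 (n - 1) w') := by
          rw [hU _ _ (hA𝔹 hx), hU _ _ (hA𝔹 hwA'), map_sub, map_sub]; abel
        rw [e]
        have h1 := norm_add_le ((ι (C (n - 1) x - C (n - 1) v) - (L * r) • y i) -
              (ι (C (n - 1) w' - C (n - 1) v) - (L * r) • y i))
            (𝓛 (n - 1) x - 𝓛 (n - 1) w')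
        have h2 := norm_sub_le (ι (C (n - 1) x - C (n - 1) v) - (L * r) • y i)
              (ι (C (n - 1) w' - C (n - 1) v) - (L * r) • y i)
        have h3 : R * (κ + 1/2) ^ (k + 1) = r * (κ + 1/2) := by rw [hr, pow_succ]; ring
        rw [h3]
        linarith
  choose V hcard hVA hV using key
  refine ⟨fun n => ⋃ k, (V k n : Set X₀), ?_, ?_, ?_⟩
  · intro n
    exact Set.iUnion_subset fun k v hv => hsub k n (hVA k n v hv)
  · intro n k x hx
    obtain ⟨v, hv, h⟩ := hV k n x hx
    exact ⟨v, Set.mem_iUnion.2 ⟨k, hv⟩, h⟩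
  · intro ε hε hεR n
    have hne : {k : ℕ | 1 ≤ k ∧ R * (κ + 1/2) ^ k ≤ ε}.Nonempty := by
      obtain ⟨k, hk⟩ := exists_pow_lt_of_lt_one (div_pos hε hR) (by linarith : κ + 1/2 < 1)
      refine ⟨k + 1, by omega, ?_⟩
      rw [lt_div_iff₀ hR] at hk
      have h1 : (κ + 1/2) ^ (k + 1) ≤ (κ + 1/2) ^ k :=
        pow_le_pow_of_le_one (by linarith) (by linarith) (by omega)
      nlinarith
    have hmem := Nat.sInf_mem hne
    set K := sInf {k : ℕ | 1 ≤ k ∧ R * (κ + 1/2) ^ k ≤ ε}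
    obtain ⟨-, hK⟩ := hmem
    set W := (Finset.range (K + 1)).biUnion fun j => V j n with hW
    refine ⟨W.card, fun i => (W.equivFin.symm i : X₀), ?_, ?_⟩
    · have h1 : W.card ≤ (Finset.range (K + 1)).card * N ^ K := by
        refine Finset.card_biUnion_le_card_mul _ _ _ fun j hj => ?_
        exact (hcard j n).trans
          (Nat.pow_le_pow_right (by omega) (Nat.lt_succ_iff.1 (Finset.mem_range.1 hj)))
      rw [Finset.card_range] at h1
      exact h1.trans (Nat.mul_le_mul (Nat.le_self_pow (by norm_num) _)
        (Nat.pow_le_pow_right (by omega) (by omega)))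
    · have hcov : ∀ v ∈ ⋃ k, (V k n : Set X₀), ∃ u ∈ W, ‖v - u‖ ≤ ε := by
        intro v hv
        obtain ⟨j, hj⟩ := Set.mem_iUnion.1 hv
        rcases le_total j K with hjK | hjK
        · exact ⟨v, Finset.mem_biUnion.2 ⟨j, Finset.mem_range.2 (by omega), hj⟩, by simp [hε.le]⟩
        · obtain ⟨u, hu, h⟩ := hV K n v (hanti n hjK (hVA j n v hj))
          exact ⟨u, Finset.mem_biUnion.2 ⟨K, Finset.mem_range.2 (by omega), hu⟩, h.trans hK⟩
      intro v hv
      obtain ⟨u, hu, h⟩ := hcov v hv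
      refine Set.mem_iUnion.2 ⟨W.equivFin ⟨u, hu⟩, ?_⟩
      rw [mem_closedBall_iff_norm]
      simpa using h
end

section
/- Let E be a real normed space, let P ⊆ E be a compact set, and let r ≥ 0. Suppose (x_n) is a sequence in E with inf_{p∈P} ‖x_n − p‖ ≤ r for every n, and suppose x_n converges to x ∈ E in the weak topology of E (i.e. ⟨f, x_n⟩ → ⟨f, x⟩ for every continuous linear functional f on E). Then inf_{p∈P} ‖x − p‖ ≤ r. -/
/-- If `P ⊆ E` is compact, `r ≥ 0`, `(x n)` is a sequence with
`inf_{p ∈ P} ‖x n - p‖ ≤ r` for every `n`, and `x n` converges weakly to `xlim` (i.e.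
`f (x n) → f xlim` for every continuous linear functional `f`), then
`inf_{p ∈ P} ‖xlim - p‖ ≤ r`. -/
theorem infDist_le_of_weak_limit
    (E : Type*) [NormedAddCommGroup E] [NormedSpace ℝ E]
    (P : Set E) (hP : IsCompact P) (r : ℝ) (hr : 0 ≤ r)
    (x : ℕ → E) (hx : ∀ n, Metric.infDist (x n) P ≤ r)
    (xlim : E)
    (hconv : ∀ f : E →L[ℝ] ℝ,
      Filter.Tendsto (fun n => f (x n)) Filter.atTop (nhds (f xlim))) :
    Metric.infDist xlim P ≤ r := by
  rcases P.eq_empty_or_nonempty with rfl | hne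
  · simpa using hr
  have h1 : ∀ n, ∃ p ∈ P, Metric.infDist (x n) P = dist (x n) p :=
    fun n => hP.exists_infDist_eq_dist hne (x n)
  choose p hpP hp using h1
  obtain ⟨q, hq, φ, hφ, hlim⟩ := hP.tendsto_subseq hpP
  refine (Metric.infDist_le_dist_of_mem hq).trans ?_
  obtain ⟨f, hf, hfx⟩ := exists_dual_vector'' ℝ (xlim - q)
  have h2 : Filter.Tendsto (fun n => f (x (φ n)) - f (p (φ n))) Filter.atTop
      (nhds (f xlim - f q)) :=
    ((hconv f).comp hφ.tendsto_atTop).sub ((f.continuous.tendsto q).comp hlim)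
  have h3 : f xlim - f q = dist xlim q := by
    rw [← map_sub, hfx, dist_eq_norm]; rfl
  rw [← h3]
  refine le_of_tendsto' h2 fun n => ?_
  rw [← map_sub]
  calc f (x (φ n) - p (φ n)) ≤ ‖f (x (φ n) - p (φ n))‖ := Real.le_norm_self _
    _ ≤ 1 * ‖x (φ n) - p (φ n)‖ := f.le_of_opNorm_le hf _
    _ = Metric.infDist (x (φ n)) P := by rw [one_mul, hp, dist_eq_norm]
    _ ≤ r := hx _
end

section
/- Let E be a real normed space, let Σ be a set and Σ_0 ⊆ Σ a subset, and for each h ∈ Σ and each real t ≥ 0 let S_h^t : E → E be a map. Let P ⊆ E be a compact set. Assume: (i) P uniformly attracts bounded sets over Σ_0, i.e. for every bounded set B ⊆ E and every ε > 0 there exists T_0 ≥ 0 such that inf_{p∈P} ‖S_h^t x − p‖ ≤ ε for all t ≥ T_0, all h ∈ Σ_0, and all x ∈ B; (ii) for every h ∈ Σ, every t ≥ 0, and every x ∈ E there exists a sequence (h_n) in Σ_0 such that S_{h_n}^t x converges to S_h^t x in the weak topology of E. Then P uniformly attracts bounded sets over all of Σ: for every bounded set B ⊆ E and every ε > 0 there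 exists T ≥ 0 such that inf_{p∈P} ‖S_h^t x − p‖ ≤ ε for all t ≥ T, all h ∈ Σ, and all x ∈ B. -/
/-- Let `P ⊆ E` be compact.  If `P` uniformly attracts bounded sets over a
subfamily `Sig₀` of symbols and every `S h t x` (for `h` in the full symbol family, `t ≥ 0`)
is a weak limit of a sequence `S (hₙ) t x` with `hₙ ∈ Sig₀`, then `P` uniformly attracts
bounded sets over the full symbol family. -/
theorem uniform_attraction_extends_to_weak_closure
    (E : Type*) [NormedAddCommGroup E] [NormedSpace ℝ E]
    (H : Type*) (Sig₀ : Set H) (S : H → ℝ → E → E)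
    (P : Set E) (hP : IsCompact P)
    (hattr : ∀ B : Set E, Bornology.IsBounded B → ∀ ε : ℝ, 0 < ε →
      ∃ T₀ : ℝ, 0 ≤ T₀ ∧ ∀ t : ℝ, T₀ ≤ t → ∀ h ∈ Sig₀, ∀ x ∈ B,
        Metric.infDist (S h t x) P ≤ ε)
    (happrox : ∀ h : H, ∀ t : ℝ, 0 ≤ t → ∀ x : E,
      ∃ hseq : ℕ → H, (∀ n, hseq n ∈ Sig₀) ∧
        ∀ f : E →L[ℝ] ℝ,
          Filter.Tendsto (fun n => f (S (hseq n) t x)) Filter.atTop (nhds (f (S h t x)))) :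
    ∀ B : Set E, Bornology.IsBounded B → ∀ ε : ℝ, 0 < ε →
      ∃ T : ℝ, 0 ≤ T ∧ ∀ t : ℝ, T ≤ t → ∀ h : H, ∀ x ∈ B,
        Metric.infDist (S h t x) P ≤ ε := by
  intro B hB ε hε
  obtain ⟨T, hT0, hT⟩ := hattr B hB ε hε
  refine ⟨T, hT0, fun t ht h x hx => ?_⟩
  rcases P.eq_empty_or_nonempty with rfl | hne
  · simpa using hε.le
  obtain ⟨hs, hs0, hlim⟩ := happrox h t (hT0.trans ht) x
  choose p hpP hp using fun n => hP.exists_infDist_eq_dist hne (S (hs n) t x)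
  obtain ⟨q, hqP, φ, hφ, hq⟩ := hP.tendsto_subseq hpP
  refine (Metric.infDist_le_dist_of_mem hqP).trans ?_
  rw [dist_eq_norm]
  obtain ⟨f, hf1, hf⟩ := exists_dual_vector'' ℝ (S h t x - q)
  have h1 : Filter.Tendsto (fun n => f (S (hs (φ n)) t x) - f (p (φ n))) Filter.atTop
      (nhds (f (S h t x) - f q)) :=
    ((hlim f).comp hφ.tendsto_atTop).sub ((f.continuous.tendsto q).comp hq)
  have hf' : f (S h t x) - f q = ‖S h t x - q‖ := by
    rw [← map_sub, hf]; rfl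
  rw [← hf']
  refine le_of_tendsto' h1 fun n => ?_
  rw [← map_sub]
  calc f (S (hs (φ n)) t x - p (φ n)) ≤ ‖f (S (hs (φ n)) t x - p (φ n))‖ := Real.le_norm_self _
    _ ≤ 1 * ‖S (hs (φ n)) t x - p (φ n)‖ := f.le_of_opNorm_le hf1 _
    _ ≤ ε := by
      rw [one_mul, ← dist_eq_norm, ← hp]
      exact hT t ht _ (hs0 _) x hx
end
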